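/- Fix $\delta \in (0,10^{-10})$, $n_r = 10$, and $D > 0$. There exists a constant $C$ (depending only on $\delta$ and $D$) with the following property. Let $f$ be a classical solution of the relativistic Vlasov–Poisson system on $[0,T)$ such that $f(t, Rx, Rv) = f(t,x,v)$ for all $R \in SO(3)$, with $\|f(t,\cdot,\cdot)\|_{L^\infty} \le D$ and $\iint (1+|v|) f(t,x,v)\,dx\,dv \le D$ for all $t \in [0,T)$, and set $\tilde M(t) := (1+t)^{2 n_r} + \sup_{s \in [0,t]} \iint (1+|v|)^{n_r} f(s,x,v)\,dx\,dv$, assumed finite. Fix $t \in [0,T)$ and suppose $(X,V) : [0,t] \to \mathbb{R}^3 \times \mathbb{R}^3$ is a $C^1$ characteristic, i.e. $X'(s) = V(s)/\sqrt{1+|V(s)|^2}$ and $V'(s) = E(s, X(s))$. If $|X(0)| + |V(0)| \le \tilde M(t)^{1/(2 n_r)}$, then $|X(t)| \le C\, \tilde M(t)^{1/(2 n_r)}$ and $|V(t)| \le C\, \tilde M(t)^{(5+2\delta)/((6-2\delta)(n_r - 1))}$. -/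

import Mathlib

open MeasureTheory Real Set
noncomputable section

abbrev E3 := EuclideanSpace ℝ (Fin 3)

/-- The relativistic velocity `v̂ = v / √(1+|v|²)`. -/
def vhat (v : E3) : E3 := (Real.sqrt (1 + ‖v‖ ^ 2))⁻¹ • v

/-- The spatial density `ρ(t,x) = ∫ f(t,x,v) dv`. -/
def rvpRho (f : ℝ → E3 → E3 → ℝ) (t : ℝ) (x : E3) : ℝ := ∫ v, f t x v

/-- The electric field `E(t,x) = (4π)⁻¹ ∫ (x-y) ρ(t,y)/|x-y|³ dy`. -/
def rvpField (f : ℝ → E3 → E3 → ℝ) (t : ℝ) (x : E3) : E3 :=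
  (4 * Real.pi)⁻¹ • ∫ y, (rvpRho f t y / ‖x - y‖ ^ 3) • (x - y)

/-- `f` is a classical solution of the relativistic Vlasov–Poisson system on the
time interval `I`: it is nonnegative, `C¹`, and satisfies the transport equation
`∂ₜ f + v̂ ⋅ ∇ₓ f + E ⋅ ∇ᵥ f = 0` pointwise (phrased as the vanishing of the
derivative of `f` in the direction `(1, v̂, E(t,x))`). -/
def IsRVPSolution (I : Set ℝ) (f : ℝ → E3 → E3 → ℝ) : Prop :=
  (∀ t ∈ I, ∀ x v, 0 ≤ f t x v) ∧
  ContDiffOn ℝ 1 (fun p : ℝ × E3 × E3 => f p.1 p.2.1 p.2.2) (I ×ˢ (Set.univ : Set (E3 × E3))) ∧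
  ∀ t ∈ I, ∀ x v,
    fderivWithin ℝ (fun p : ℝ × E3 × E3 => f p.1 p.2.1 p.2.2)
      (I ×ˢ (Set.univ : Set (E3 × E3))) (t, x, v) (1, vhat v, rvpField f t x) = 0

/-- The `n_r`-th velocity moment `M_{n_r}(s)`, with `n_r = 10`. -/
def momentTen (f : ℝ → E3 → E3 → ℝ) (s : ℝ) : ℝ :=
  ∫ p : E3 × E3, (1 + ‖p.2‖) ^ (10 : ℕ) * f s p.1 p.2

/-- The enlarged moment `\tilde M^r(t) = (1+t)^{2 n_r} + sup_{s ∈ [0,t]} M_{n_r}(s)`. -/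
def tildeMr (f : ℝ → E3 → E3 → ℝ) (t : ℝ) : ℝ :=
  (1 + t) ^ (20 : ℕ) + sSup (momentTen f '' Set.Icc 0 t)

lemma refl_det (w : E3) (hw : w ≠ 0) : (Submodule.reflection (ℝ ∙ w)).toLinearEquiv.det = 1 := by
  have h := Submodule.linearEquiv_det_reflection (ℝ ∙ w)
  rw [show Module.finrank ℝ (ℝ ∙ w)ᗮ = 2 from by
    have := Submodule.finrank_add_finrank_orthogonal (ℝ ∙ w)
    rw [finrank_span_singleton hw] at this
    simp at this; omega] at h
  simpa using h

lemma exists_rot (x y : E3) (h : ‖x‖ = ‖y‖) :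
    ∃ R : E3 ≃ₗᵢ[ℝ] E3, R.toLinearEquiv.det = 1 ∧ R x = y := by
  by_cases hxy : x + y = 0
  · obtain ⟨w, hw, hw0⟩ : ∃ w ∈ (ℝ ∙ x)ᗮ, w ≠ 0 := by
      apply Submodule.exists_mem_ne_zero_of_ne_bot
      intro hb
      have := Submodule.finrank_add_finrank_orthogonal (ℝ ∙ x)
      rw [hb] at this
      have h2 := finrank_span_le_card (R := ℝ) ({x} : Set E3)
      simp at this h2
      omega
    refine ⟨Submodule.reflection (ℝ ∙ w), refl_det w hw0, ?_⟩
    rw [Submodule.reflection_mem_subspace_orthogonalComplement_eq_neg]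
    · exact (eq_neg_of_add_eq_zero_right hxy).symm
    · rw [Submodule.mem_orthogonal_singleton_iff_inner_right] at hw ⊢
      rw [real_inner_comm]; exact hw
  · refine ⟨Submodule.reflection (ℝ ∙ (x + y)), refl_det _ hxy, ?_⟩
    have := Submodule.reflection_sub (v := x) (w := -y) (by simpa using h)
    rw [sub_neg_eq_add, Submodule.reflection_orthogonal_apply] at this
    exact neg_injective this

lemma sq_push : MeasurePreserving (fun w : ℝ × ℝ => w.1 ^ 2 + w.2 ^ 2) volume
    (ENNReal.ofReal π • (volume.restrict (Ioi (0:ℝ)))) := by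
  have hm : Measurable (fun w : ℝ × ℝ => w.1 ^ 2 + w.2 ^ 2) := by fun_prop
  refine ⟨hm, ?_⟩
  have key : ∀ b : ℝ, volume {w : ℝ × ℝ | w.1 ^ 2 + w.2 ^ 2 ≤ b} = ENNReal.ofReal (π * max b 0) := by
    intro b
    rw [← Complex.volume_preserving_equiv_real_prod.measure_preimage
      (measurableSet_le hm measurable_const).nullMeasurableSet]
    rcases lt_or_ge b 0 with hb | hb
    · rw [max_eq_right hb.le]
      simp only [mul_zero, ENNReal.ofReal_zero]
      convert measure_empty (μ := (volume : Measure ℂ))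
      ext w
      simp only [mem_preimage, mem_ofPred_eq, mem_empty_iff_false, iff_false, not_le]
      exact hb.trans_le (by positivity)
    · rw [max_eq_left hb]
      have : (Complex.measurableEquivRealProd ⁻¹' {w : ℝ × ℝ | w.1 ^ 2 + w.2 ^ 2 ≤ b})
          = Metric.closedBall (0:ℂ) (√b) := by
        ext w
        simp only [mem_preimage, mem_ofPred_eq, Metric.mem_closedBall, dist_zero_right,
          Complex.measurableEquivRealProd_apply]
        rw [Complex.norm_def, Real.sqrt_le_sqrt_iff hb, Complex.normSq_apply]
        simp only [pow_two]
      rw [this, Complex.volume_closedBall, ← ENNReal.ofReal_pow (by positivity), Real.sq_sqrt hb,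
        mul_comm π, ENNReal.ofReal_mul hb]
      congr 1
      rw [← NNReal.coe_real_pi, ENNReal.ofReal_coe_nnreal]
  have e1 : ∀ a b : ℝ, a < b → (Measure.map (fun w : ℝ × ℝ => w.1 ^ 2 + w.2 ^ 2) volume) (Ioc a b)
      = ENNReal.ofReal (π * max b 0) - ENNReal.ofReal (π * max a 0) := by
    intro a b hab
    rw [Measure.map_apply hm measurableSet_Ioc, ← key a, ← key b, ← measure_sdiff]
    · congr 1
      ext w
      simp [and_comm]
    · intro w hw
      exact le_trans hw hab.le
    · exact (measurableSet_le hm measurable_const).nullMeasurableSet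
    · rw [key]; exact ENNReal.ofReal_ne_top
  apply Measure.ext_of_Ioc'
  · intro a b hab
    rw [e1 a b hab]
    exact ENNReal.sub_ne_top ENNReal.ofReal_ne_top
  · intro a b hab
    rw [e1 a b hab, Measure.smul_apply, Measure.restrict_apply measurableSet_Ioc, Ioc_inter_Ioi,
      Real.volume_Ioc, smul_eq_mul, ← ENNReal.ofReal_mul pi_pos.le,
      ← ENNReal.ofReal_sub _ (by positivity)]
    rcases le_total b 0 with hb | hb
    · rw [max_eq_right hb, max_eq_right (hab.le.trans hb)]
      rw [ENNReal.ofReal_of_nonpos (by simp), ENNReal.ofReal_of_nonpos]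
      simp; nlinarith [pi_pos]
    · rw [max_eq_left hb]
      congr 1; ring

lemma E3_push : MeasurePreserving (fun y : E3 => (y 0, ‖y‖ ^ 2)) volume
    (ENNReal.ofReal π • ((volume : Measure (ℝ × ℝ)).restrict {p | p.1 ^ 2 < p.2})) := by
  have h1 := EuclideanSpace.volume_preserving_symm_measurableEquiv_toLp (Fin 3)
  have h2 := volume_preserving_piFinSuccAbove (fun _ : Fin 3 => ℝ) 0
  have h3 := volume_preserving_finTwoArrow ℝ
  have h4 : MeasurePreserving (fun p : ℝ × (Fin 2 → ℝ) => (p.1, (p.2 0) ^ 2 + (p.2 1) ^ 2))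
      (volume.prod volume)
      (volume.prod (ENNReal.ofReal π • (volume.restrict (Ioi (0:ℝ))))) :=
    (MeasurePreserving.id (volume : Measure ℝ)).prod (sq_push.comp h3)
  have h5 : MeasurePreserving (fun p : ℝ × ℝ => (p.1, p.1 ^ 2 + p.2))
      (volume.prod volume) (volume.prod volume) :=
    (MeasurePreserving.id (volume : Measure ℝ)).skew_product
      (g := fun a b => a ^ 2 + b) (by fun_prop)
      (Filter.Eventually.of_forall fun a => (measurePreserving_add_left volume (a ^ 2)).map_eq)
  have h6 := (h5.restrict_preimage (s := {p | p.1 ^ 2 < p.2})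
    (measurableSet_lt (by fun_prop) (by fun_prop))).smul_measure (ENNReal.ofReal π)
  have h7 := h6.comp (μa := volume.prod volume) (f := fun p : ℝ × (Fin 2 → ℝ) => (p.1, (p.2 0) ^ 2 + (p.2 1) ^ 2)) (by
    convert h4 using 1
    rw [Measure.prod_smul_right]
    congr 1
    have : (fun p : ℝ × ℝ => (p.1, p.1 ^ 2 + p.2)) ⁻¹' {p | p.1 ^ 2 < p.2} = univ ×ˢ Ioi (0:ℝ) := by
      ext p; simp
    rw [this, ← Measure.prod_restrict, Measure.restrict_univ])
  have h8 := h7.comp (h2.comp h1)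
  have heq : (fun y : E3 => (y 0, ‖y‖ ^ 2)) =
    ((fun p : ℝ × ℝ => (p.1, p.1 ^ 2 + p.2)) ∘ fun p : ℝ × (Fin 2 → ℝ) => (p.1, p.2 0 ^ 2 + p.2 1 ^ 2)) ∘
      (MeasurableEquiv.piFinSuccAbove (fun _ : Fin 3 => ℝ) 0) ∘ (MeasurableEquiv.toLp 2 (Fin 3 → ℝ)).symm := by
    funext y
    refine Prod.ext rfl ?_
    simp only [EuclideanSpace.norm_sq_eq, Fin.sum_univ_three, Real.norm_eq_abs, sq_abs, add_assoc]
    rfl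
  rw [heq]
  exact h8

lemma inner_int (a s : ℝ) (ha : 0 < a) (hs : 0 < s) (hne : s ≠ a) :
    ∫ z in (-s)..s, a * (a - z) / √(a ^ 2 + s ^ 2 - 2 * a * z) ^ 3
      = (1 / a) * (if s < a then 2 * s else 0) := by
  have hq : ∀ z ∈ uIcc (-s) s, 0 < a ^ 2 + s ^ 2 - 2 * a * z := by
    intro z hz
    rw [uIcc_of_le (by linarith)] at hz
    have : 0 < (a - s) ^ 2 := by
      have : a - s ≠ 0 := fun h => hne (by linarith)
      positivity
    nlinarith [hz.2]
  have hd : ∀ z ∈ uIcc (-s) s, HasDerivAt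
      (fun z => (a * z - s ^ 2) / (a * √(a ^ 2 + s ^ 2 - 2 * a * z)))
      (a * (a - z) / √(a ^ 2 + s ^ 2 - 2 * a * z) ^ 3) z := by
    intro z hz
    have h0 := hq z hz
    have h1 : HasDerivAt (fun z : ℝ => a ^ 2 + s ^ 2 - 2 * a * z) (-(2 * a)) z := by
      simpa using ((hasDerivAt_id z).const_mul (2 * a)).const_sub (a ^ 2 + s ^ 2)
    have h2 := (h1.sqrt h0.ne').const_mul a
    have h3 : HasDerivAt (fun z : ℝ => a * z - s ^ 2) a z := by
      simpa using ((hasDerivAt_id z).const_mul a).sub_const (s ^ 2)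
    have hr : 0 < √(a ^ 2 + s ^ 2 - 2 * a * z) := Real.sqrt_pos.2 h0
    refine (h3.div h2 (by positivity)).congr_deriv ?_
    have hsq := Real.sq_sqrt h0.le
    generalize √(a ^ 2 + s ^ 2 - 2 * a * z) = r at hr hsq
    field_simp
    rw [hsq]; ring
  rw [intervalIntegral.integral_eq_sub_of_hasDerivAt hd]
  · rw [show a ^ 2 + s ^ 2 - 2 * a * s = (a - s) ^ 2 by ring,
      show a ^ 2 + s ^ 2 - 2 * a * (-s) = (a + s) ^ 2 by ring, Real.sqrt_sq_eq_abs,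
      Real.sqrt_sq (by positivity)]
    split_ifs with h
    · rw [abs_of_pos (by linarith)]
      have : a - s ≠ 0 := by linarith
      field_simp; ring
    · rw [abs_of_neg (by rcases lt_or_gt_of_ne hne with h1 | h1 <;> linarith)]
      have : -(a - s) ≠ 0 := fun h => hne (by linarith)
      have h2 : a + s ≠ 0 := by positivity
      field_simp; ring
  · apply ContinuousOn.intervalIntegrable
    apply ContinuousOn.div
    · fun_prop
    · fun_prop
    · intro z hz
      have := Real.sqrt_pos.2 (hq z hz)
      positivity

lemma push_integral (k : ℝ × ℝ → ℝ) (hk : Measurable k)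
    (hi : Integrable (fun y : E3 => k (y 0, ‖y‖ ^ 2))) :
    ∫ y : E3, k (y 0, ‖y‖ ^ 2) = π * ∫ q, ∫ z, ({p : ℝ × ℝ | p.1 ^ 2 < p.2}.indicator k) (z, q) := by
  have hms : MeasurableSet {p : ℝ × ℝ | p.1 ^ 2 < p.2} :=
    measurableSet_lt (by fun_prop) (by fun_prop)
  have h0 : ENNReal.ofReal π ≠ 0 := by simpa using pi_pos
  have hi2 := (E3_push.integrable_comp (g := k) hk.aestronglyMeasurable).1 hi
  rw [integrable_smul_measure h0 ENNReal.ofReal_ne_top] at hi2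
  have e := integral_map (μ := volume) (φ := fun y : E3 => (y 0, ‖y‖ ^ 2)) E3_push.measurable.aemeasurable
    (f := k) hk.aestronglyMeasurable
  rw [E3_push.map_eq] at e
  rw [← e, integral_smul_measure, ENNReal.toReal_ofReal pi_pos.le, smul_eq_mul]
  congr 1
  rw [← integral_indicator hms]
  have hi3 : Integrable ({p : ℝ × ℝ | p.1 ^ 2 < p.2}.indicator k) :=
    (integrable_indicator_iff hms).2 hi2
  exact integral_prod_symm _ hi3

lemma shell (ρ : E3 → ℝ) (g : ℝ → ℝ) (hg : Measurable g) (hρ : ∀ y, ρ y = g (‖y‖ ^ 2))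
    (hint : Integrable ρ) (a : ℝ) (ha : 0 < a) (x : E3) (hx : x = EuclideanSpace.single 0 a)
    (hK : Integrable fun y => (ρ y / ‖x - y‖ ^ 3) • (x - y)) :
    inner ℝ x (∫ y, (ρ y / ‖x - y‖ ^ 3) • (x - y)) = (1 / a) * ∫ y in Metric.ball 0 a, ρ y := by
  have hxy : ∀ y, inner ℝ x y = a * y 0 := by
    intro y; subst hx; simp [EuclideanSpace.inner_single_left]
  have hxn : ‖x‖ = a := by subst hx; simp [ha.le]
  have hn : ∀ y, ‖x - y‖ = √(a ^ 2 + ‖y‖ ^ 2 - 2 * a * y 0) := by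
    intro y
    rw [← Real.sqrt_sq (norm_nonneg (x - y)), norm_sub_sq_real, hxy, hxn]
    congr 1; ring
  obtain ⟨k1, hk1⟩ : ∃ k : ℝ × ℝ → ℝ, k = fun p : ℝ × ℝ =>
    g p.2 * (a * (a - p.1) / √(a ^ 2 + p.2 - 2 * a * p.1) ^ 3) := ⟨_, rfl⟩
  obtain ⟨k2, hk2⟩ : ∃ k : ℝ × ℝ → ℝ, k = fun p : ℝ × ℝ => if p.2 < a ^ 2 then g p.2 else 0 :=
    ⟨_, rfl⟩
  have m1 : Measurable k1 := by rw [hk1]; fun_prop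
  have m2 : Measurable k2 := by
    rw [hk2]
    exact Measurable.ite (measurableSet_lt (by fun_prop) (by fun_prop)) (by fun_prop) (by fun_prop)
  have e1 : ∀ y, inner ℝ x ((ρ y / ‖x - y‖ ^ 3) • (x - y)) = k1 (y 0, ‖y‖ ^ 2) := by
    intro y
    rw [inner_smul_right, inner_sub_right, real_inner_self_eq_norm_sq, hxy, hxn, hn, hρ]
    simp only [hk1]
    ring
  have e2 : ∀ y, (Metric.ball (0:E3) a).indicator ρ y = k2 (y 0, ‖y‖ ^ 2) := by
    intro y
    have hiff : ‖y‖ ^ 2 < a ^ 2 ↔ ‖y‖ < a :=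
      pow_lt_pow_iff_left₀ (norm_nonneg y) ha.le (by norm_num)
    simp only [hk2, hiff]
    split_ifs with h
    · rw [indicator_of_mem (by simpa using h), hρ]
    · rw [indicator_of_notMem (by simpa using h)]
  rw [← integral_inner hK, ← integral_indicator Metric.isOpen_ball.measurableSet]
  have i1 := hK.const_inner (𝕜 := ℝ) x
  have i2 := hint.indicator (s := Metric.ball (0:E3) a) Metric.isOpen_ball.measurableSet
  simp only [e1] at i1 ⊢
  simp only [e2]
  have i2' : Integrable (fun y : E3 => k2 (y 0, ‖y‖ ^ 2)) := by
    simpa only [← e2] using i2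
  rw [push_integral _ m1 i1, push_integral _ m2 i2']
  rw [mul_left_comm]
  congr 1
  rw [← integral_const_mul]
  apply integral_congr_ae
  have hae : ∀ᵐ q : ℝ, q ≠ a ^ 2 := by
    simp [ae_iff, measure_singleton]
  filter_upwards [hae] with q hq
  rcases le_or_gt q 0 with hq0 | hq0
  · have : ∀ k : ℝ × ℝ → ℝ, ∀ z : ℝ, ({p : ℝ × ℝ | p.1 ^ 2 < p.2}.indicator k) (z, q) = 0 := by
      intro k z
      apply indicator_of_notMem
      simp only [mem_ofPred_eq, not_lt]
      exact hq0.trans (sq_nonneg z)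
    simp [this]
  · set s := √q with hs
    have hs0 : 0 < s := Real.sqrt_pos.2 hq0
    have hsq : q = s ^ 2 := (Real.sq_sqrt hq0.le).symm
    have key : ∀ k : ℝ × ℝ → ℝ, ∫ z, ({p : ℝ × ℝ | p.1 ^ 2 < p.2}.indicator k) (z, q)
        = ∫ z in (-s)..s, k (z, q) := by
      intro k
      rw [intervalIntegral.integral_of_le (by linarith), integral_Ioc_eq_integral_Ioo,
        ← integral_indicator measurableSet_Ioo]
      congr 1
      ext z
      have hiff : z ^ 2 < q ↔ -s < z ∧ z < s := by
        rw [hsq, sq_lt_sq, abs_of_pos hs0, abs_lt]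
      by_cases h : z ^ 2 < q
      · rw [indicator_of_mem (by exact h), indicator_of_mem (by exact hiff.1 h)]
      · rw [indicator_of_notMem (by exact h), indicator_of_notMem (by exact fun h' => h (hiff.2 h'))]
    rw [key, key]
    simp only [hk1, hk2]
    rw [intervalIntegral.integral_const_mul, hsq, inner_int a s ha hs0 (by rintro rfl; exact hq hsq),
      intervalIntegral.integral_const]
    have : s ^ 2 < a ^ 2 ↔ s < a := pow_lt_pow_iff_left₀ hs0.le ha.le (by norm_num)
    simp only [this]
    split_ifs
    · simp; ring
    · simp

lemma rho_rot (f : ℝ → E3 → E3 → ℝ) (t : ℝ) (R : E3 ≃ₗᵢ[ℝ] E3)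
    (hR : ∀ x v, f t (R x) (R v) = f t x v) (x : E3) : rvpRho f t (R x) = rvpRho f t x := by
  unfold rvpRho
  rw [← R.measurePreserving.integral_comp R.toHomeomorph.measurableEmbedding]
  simp only [hR]

lemma field_rot (f : ℝ → E3 → E3 → ℝ) (t : ℝ) (R : E3 ≃ₗᵢ[ℝ] E3)
    (hR : ∀ x v, f t (R x) (R v) = f t x v) (x : E3) :
    rvpField f t (R x) = R (rvpField f t x) := by
  unfold rvpField
  rw [← R.measurePreserving.integral_comp R.toHomeomorph.measurableEmbedding, map_smul]
  congr 1
  simp only [rho_rot f t R hR, ← map_sub, R.norm_map, ← map_smul]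
  exact R.toContinuousLinearEquiv.integral_comp_comm _

lemma field_par (f : ℝ → E3 → E3 → ℝ) (t : ℝ)
    (hrot : ∀ R : E3 ≃ₗᵢ[ℝ] E3, R.toLinearEquiv.det = 1 → ∀ x v, f t (R x) (R v) = f t x v) (x : E3) :
    ∃ e : ℝ, rvpField f t x = e • x := by
  by_cases hx : x = 0
  · subst hx
    obtain ⟨R, hR, hR2⟩ := exists_rot (rvpField f t 0) (-rvpField f t 0) (by simp)
    have := field_rot f t R (hrot R hR) 0
    rw [map_zero, hR2] at this
    have h0 : rvpField f t 0 = 0 := by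
      have h2 : (2:ℝ) • rvpField f t 0 = 0 := by
        rw [two_smul]; nth_rewrite 2 [this]; exact add_neg_cancel _
      exact (smul_eq_zero.1 h2).resolve_left (by norm_num)
    exact ⟨0, by simpa using h0⟩
  · have := field_rot f t _ (hrot _ (refl_det x hx)) x
    rw [Submodule.reflection_mem_subspace_eq_self (Submodule.mem_span_singleton_self x)] at this
    have h2 := (Submodule.reflection_eq_self_iff _).1 this.symm
    obtain ⟨e, he⟩ := Submodule.mem_span_singleton.1 h2
    exact ⟨e, he.symm⟩

lemma rho_meas (f : ℝ → E3 → E3 → ℝ) (t : ℝ)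
    (hc : Continuous (fun p : E3 × E3 => f t p.1 p.2)) : Measurable (rvpRho f t) := by
  have := hc.stronglyMeasurable.integral_prod_right' (ν := (volume : Measure E3))
  exact this.measurable

lemma f_int (f : ℝ → E3 → E3 → ℝ) (t : ℝ)
    (hc : Continuous (fun p : E3 × E3 => f t p.1 p.2)) (hpos : ∀ x v, 0 ≤ f t x v)
    (hi : Integrable (fun p : E3 × E3 => (1 + ‖p.2‖) * f t p.1 p.2)) :
    Integrable (fun p : E3 × E3 => f t p.1 p.2) := by
  refine hi.mono' hc.aestronglyMeasurable (Filter.Eventually.of_forall fun p => ?_)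
  rw [Real.norm_of_nonneg (hpos _ _)]
  nlinarith [hpos p.1 p.2, norm_nonneg p.2, mul_nonneg (norm_nonneg p.2) (hpos p.1 p.2)]

lemma field_bound (f : ℝ → E3 → E3 → ℝ) (t : ℝ)
    (hrot : ∀ R : E3 ≃ₗᵢ[ℝ] E3, R.toLinearEquiv.det = 1 → ∀ x v, f t (R x) (R v) = f t x v)
    (hc : Continuous (fun p : E3 × E3 => f t p.1 p.2)) (hpos : ∀ x v, 0 ≤ f t x v)
    (hi : Integrable (fun p : E3 × E3 => (1 + ‖p.2‖) * f t p.1 p.2)) (x : E3) (hx : x ≠ 0) :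
    0 ≤ inner ℝ x (rvpField f t x) ∧
    inner ℝ x (rvpField f t x) ≤ (1 / ‖x‖) * ∫ y in Metric.ball 0 ‖x‖, rvpRho f t y := by
  have ha : 0 < ‖x‖ := norm_pos_iff.2 hx
  have hm0 : 0 ≤ ∫ y in Metric.ball 0 ‖x‖, rvpRho f t y :=
    integral_nonneg fun y => integral_nonneg fun v => hpos y v
  obtain ⟨R, hR, hR2⟩ := exists_rot x (EuclideanSpace.single 0 ‖x‖) (by simp)
  rw [← R.inner_map_map, ← field_rot f t R (hrot R hR), hR2]
  unfold rvpField
  rw [inner_smul_right]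
  set x' : E3 := EuclideanSpace.single 0 ‖x‖ with hx'
  by_cases hK : Integrable fun y => (rvpRho f t y / ‖x' - y‖ ^ 3) • (x' - y)
  · have hint : Integrable (rvpRho f t) := (f_int f t hc hpos hi).integral_prod_left
    have hg : Measurable (fun q : ℝ => rvpRho f t (EuclideanSpace.single 0 (√q))) := by
      apply (rho_meas f t hc).comp
      have : Continuous (fun q : ℝ => (EuclideanSpace.single 0 (√q) : E3)) := by
        have : (fun q : ℝ => (EuclideanSpace.single 0 (√q) : E3))
            = fun q => √q • (EuclideanSpace.single 0 1 : E3) := by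
          funext q; ext i; by_cases hi : i = 0 <;> simp [hi]
        rw [this]; fun_prop
      exact this.measurable
    have h := shell (rvpRho f t) _ hg (by
      intro y
      obtain ⟨S, hS, hS2⟩ := exists_rot y (EuclideanSpace.single 0 ‖y‖) (by simp)
      rw [Real.sqrt_sq (norm_nonneg y), ← hS2, rho_rot f t S (hrot S hS)]) hint ‖x‖ ha x' hx' hK
    rw [h]
    have h4 : (4 * π)⁻¹ ≤ 1 := inv_le_one_of_one_le₀ (by nlinarith [pi_gt_three])
    have h5 : 0 ≤ (1 / ‖x‖) * ∫ y in Metric.ball 0 ‖x‖, rvpRho f t y := by positivity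
    exact ⟨mul_nonneg (by positivity) h5, mul_le_of_le_one_left h5 h4⟩
  · rw [integral_undef hK]
    simp only [inner_zero_right, mul_zero, le_refl, true_and]
    positivity

lemma mass_bound (f : ℝ → E3 → E3 → ℝ) (t D : ℝ)
    (hc : Continuous (fun p : E3 × E3 => f t p.1 p.2)) (hpos : ∀ x v, 0 ≤ f t x v)
    (hfD : ∀ x v, f t x v ≤ D) (hD : 0 < D)
    (hi : Integrable (fun p : E3 × E3 => (1 + ‖p.2‖) * f t p.1 p.2)) (k : ℕ)
    (hik : Integrable (fun p : E3 × E3 => (1 + ‖p.2‖) ^ k * f t p.1 p.2)) (a P : ℝ) (ha : 0 < a)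
    (hP : 0 < P) :
    ∫ y in Metric.ball 0 a, rvpRho f t y ≤
      D * (volume.real (Metric.ball (0:E3) 1)) ^ 2 * a ^ 3 * P ^ 3 +
      (P ^ k)⁻¹ * ∫ p : E3 × E3, (1 + ‖p.2‖) ^ k * f t p.1 p.2 := by
  have hfi := f_int f t hc hpos hi
  have e1 : ∫ y in Metric.ball 0 a, rvpRho f t y =
      ∫ p, ((Metric.ball (0:E3) a) ×ˢ (univ : Set E3)).indicator (fun p : E3 × E3 => f t p.1 p.2) p := by
    rw [integral_indicator (Metric.isOpen_ball.measurableSet.prod MeasurableSet.univ),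
      Measure.volume_eq_prod, setIntegral_prod _ hfi.integrableOn]
    simp [rvpRho]
  have hms : MeasurableSet ((Metric.ball (0:E3) a) ×ˢ (Metric.ball (0:E3) P)) :=
    Metric.isOpen_ball.measurableSet.prod Metric.isOpen_ball.measurableSet
  have hv : volume.real ((Metric.ball (0:E3) a) ×ˢ (Metric.ball (0:E3) P)) =
      (volume.real (Metric.ball (0:E3) 1)) ^ 2 * a ^ 3 * P ^ 3 := by
    rw [Measure.volume_eq_prod, measureReal_prod_prod]
    simp only [Measure.real]
    rw [Measure.addHaar_ball _ _ ha.le, Measure.addHaar_ball _ _ hP.le, ENNReal.toReal_mul,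
      ENNReal.toReal_mul, ENNReal.toReal_ofReal (by positivity),
      ENNReal.toReal_ofReal (by positivity)]
    simp only [finrank_euclideanSpace, Fintype.card_fin]
    ring
  have hfin : volume ((Metric.ball (0:E3) a) ×ˢ (Metric.ball (0:E3) P)) ≠ ⊤ := by
    rw [Measure.volume_eq_prod, Measure.prod_prod]
    exact ENNReal.mul_ne_top measure_ball_lt_top.ne measure_ball_lt_top.ne
  have i1 : Integrable (((Metric.ball (0:E3) a) ×ˢ (Metric.ball (0:E3) P)).indicator (fun _ => D)) :=
    (integrable_indicator_iff hms).2 (integrableOn_const hfin)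
  have i2 := hik.const_mul (P ^ k)⁻¹
  rw [e1, ← integral_const_mul, mul_assoc D, mul_assoc D, ← hv]
  have e2 : D * volume.real ((Metric.ball (0:E3) a) ×ˢ (Metric.ball (0:E3) P)) =
      ∫ p, ((Metric.ball (0:E3) a) ×ˢ (Metric.ball (0:E3) P)).indicator (fun _ => D) p := by
    rw [integral_indicator hms, setIntegral_const, smul_eq_mul, mul_comm]
  rw [e2, ← integral_add i1 i2]
  apply integral_mono
  · exact hfi.indicator (Metric.isOpen_ball.measurableSet.prod MeasurableSet.univ)
  · exact i1.add i2
  · intro p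
    have h0 := hpos p.1 p.2
    have h1 : 0 ≤ (P ^ k)⁻¹ * ((1 + ‖p.2‖) ^ k * f t p.1 p.2) := by positivity
    simp only
    by_cases hp1 : p.1 ∈ Metric.ball (0:E3) a
    · rw [indicator_of_mem (by exact ⟨hp1, trivial⟩)]
      by_cases hp2 : p.2 ∈ Metric.ball (0:E3) P
      · rw [indicator_of_mem (by exact ⟨hp1, hp2⟩)]
        have := hfD p.1 p.2
        linarith
      · rw [indicator_of_notMem (by exact fun h => hp2 h.2), zero_add]
        have hle : P ≤ 1 + ‖p.2‖ := by
          simp at hp2; linarith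
        have : P ^ k ≤ (1 + ‖p.2‖) ^ k := pow_le_pow_left₀ hP.le hle k
        rw [← mul_assoc]
        apply le_mul_of_one_le_left h0
        rw [inv_mul_eq_div, one_le_div (by positivity)]
        exact this
    · rw [indicator_of_notMem (by exact fun h => hp1 h.1), indicator_of_notMem (by exact fun h => hp1 h.1)]
      linarith

lemma cube_aux (u b : ℝ) (hb : 0 ≤ b) (h : u ^ 2 ≤ 2 * b ^ 2) : u ^ 3 ≤ 3 * b ^ 3 := by
  apply le_of_abs_le
  apply abs_le_of_sq_le_sq _ (by positivity)
  have := pow_le_pow_left₀ (sq_nonneg u) h 3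
  nlinarith [pow_nonneg hb 6]

lemma field_est (f : ℝ → E3 → E3 → ℝ) (t D N : ℝ)
    (hrot : ∀ R : E3 ≃ₗᵢ[ℝ] E3, R.toLinearEquiv.det = 1 → ∀ x v, f t (R x) (R v) = f t x v)
    (hc : Continuous (fun p : E3 × E3 => f t p.1 p.2)) (hpos : ∀ x v, 0 ≤ f t x v)
    (hfD : ∀ x v, f t x v ≤ D) (hD : 0 < D)
    (hi : Integrable (fun p : E3 × E3 => (1 + ‖p.2‖) * f t p.1 p.2))
    (hiD : (∫ p : E3 × E3, (1 + ‖p.2‖) * f t p.1 p.2) ≤ D)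
    (hi10 : Integrable (fun p : E3 × E3 => (1 + ‖p.2‖) ^ 10 * f t p.1 p.2))
    (hN : 1 ≤ N) (hM : momentTen f t ≤ N ^ 13) (x : E3) :
    ∃ e : ℝ, 0 ≤ e ∧ rvpField f t x = e • x ∧ e * ‖x‖ * √(‖x‖ + (N ^ 2)⁻¹) ^ 3 ≤
      3 * (D * (volume.real (Metric.ball (0:E3) 1)) ^ 2 + D + 1) := by
  have hN0 : 0 < N := by linarith
  set c := D * (volume.real (Metric.ball (0:E3) 1)) ^ 2 with hcc
  have hc0 : 0 ≤ c := by positivity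
  obtain ⟨e, he⟩ := field_par f t hrot x
  by_cases hx : x = 0
  · exact ⟨0, le_refl _, by rw [he, hx]; simp, by simp; positivity⟩
  have ha : 0 < ‖x‖ := norm_pos_iff.2 hx
  obtain ⟨h1, h2⟩ := field_bound f t hrot hc hpos hi x hx
  rw [he, inner_smul_right, real_inner_self_eq_norm_sq] at h1 h2
  have he0 : 0 ≤ e := nonneg_of_mul_nonneg_left h1 (by positivity)
  refine ⟨e, he0, he, ?_⟩
  have mb1 := fun P hP => mass_bound f t D hc hpos hfD hD hi 1 (by simpa using hi) ‖x‖ P ha hP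
  have mb10 := fun P hP => mass_bound f t D hc hpos hfD hD hi 10 hi10 ‖x‖ P ha hP
  have mbD : ∫ y in Metric.ball 0 ‖x‖, rvpRho f t y ≤ D := by
    have hfi := f_int f t hc hpos hi
    refine le_trans ?_ hiD
    have hint : Integrable (rvpRho f t) := hfi.integral_prod_left
    refine (setIntegral_le_integral hint (Filter.Eventually.of_forall
      fun y => integral_nonneg fun v => hpos y v)).trans ?_
    have : ∫ y, rvpRho f t y = ∫ p : E3 × E3, f t p.1 p.2 := (integral_prod _ hfi).symm
    rw [this]
    apply integral_mono hfi hi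
    intro p
    have := mul_nonneg (norm_nonneg p.2) (hpos p.1 p.2)
    simp only; linarith
  simp only [← hcc, pow_one] at mb1 mb10
  change ∀ P, 0 < P → _ ≤ _ + _ * momentTen f t at mb10
  generalize (∫ y in Metric.ball 0 ‖x‖, rvpRho f t y) = m at *
  generalize ‖x‖ = a at *
  have h3 : e * a ≤ m / a ^ 2 := by
    rw [le_div_iff₀ (by positivity)]
    have := mul_le_mul_of_nonneg_right h2 ha.le
    field_simp at this
    nlinarith
  set u := √(a + (N ^ 2)⁻¹) with hu
  have hu0 : 0 ≤ u := Real.sqrt_nonneg _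
  have hNi : 0 < (N ^ 2)⁻¹ := by positivity
  have hNi1 : (N ^ 2)⁻¹ ≤ 1 := inv_le_one_of_one_le₀ (one_le_pow₀ hN)
  have hu2 : u ^ 2 = a + (N ^ 2)⁻¹ := Real.sq_sqrt (by positivity)
  set b := √a with hb
  have hb0 : 0 < b := Real.sqrt_pos.2 ha
  have hab : a = b ^ 2 := (Real.sq_sqrt ha.le).symm
  have suff : ∀ B w : ℝ, 0 ≤ B → m / a ^ 2 ≤ B → u ^ 3 ≤ w → B * w ≤ 3 * (c + D + 1) →
      e * a * u ^ 3 ≤ 3 * (c + D + 1) := by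
    intro B w hB h4 h5 h6
    exact (mul_le_mul (h3.trans h4) h5 (by positivity) hB).trans h6
  rcases le_or_gt 1 a with h1a | h1a
  · have hb1 : 1 ≤ b := by rw [hb]; exact Real.one_le_sqrt.2 h1a
    refine suff (D / a ^ 2) (3 * b ^ 3) (by positivity) (by gcongr) (cube_aux u b hb0.le (by linarith)) ?_
    rw [hab]
    have : D / (b ^ 2) ^ 2 * (3 * b ^ 3) = 3 * D / b := by field_simp
    rw [this]
    have : 3 * D / b ≤ 3 * D := div_le_self (by positivity) hb1
    linarith
  · have hb1 : b ≤ 1 := by rw [hb]; exact Real.sqrt_le_one.2 h1a.le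
    rcases le_or_gt (N ^ 2)⁻¹ a with h2a | h2a
    · refine suff ((c + D) / b ^ 3) (3 * b ^ 3) (by positivity) ?_ (cube_aux u b hb0.le (by linarith)) ?_
      · have := mb1 (b⁻¹) (by positivity)
        have h5 : m ≤ (c + D) * b := by
          refine this.trans ?_
          rw [inv_inv, hab]
          have : c * (b ^ 2) ^ 3 * b⁻¹ ^ 3 = c * b ^ 3 := by field_simp
          rw [this]
          have h7 : b ^ 3 ≤ b := by nlinarith [mul_le_mul_of_nonneg_left hb1 hb0.le]
          have := mul_le_mul_of_nonneg_left hiD hb0.le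
          have := mul_le_mul_of_nonneg_left h7 hc0
          linarith
        rw [hab, div_le_div_iff₀ (by positivity) (by positivity)]
        have := mul_le_mul_of_nonneg_right h5 (by positivity : 0 ≤ b ^ 3)
        linarith [this]
      · have : (c + D) / b ^ 3 * (3 * b ^ 3) = 3 * (c + D) := by field_simp
        rw [this]; linarith
    · refine suff ((c + 1) * N ^ 3) (3 * N⁻¹ ^ 3) (by positivity) ?_
        (cube_aux u _ (by positivity) (by rw [inv_pow]; linarith)) ?_
      · set d := √b with hd
        have hd0 : 0 < d := Real.sqrt_pos.2 hb0
        have hbd : b = d ^ 2 := (Real.sq_sqrt hb0.le).symm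
        have hd1 : d ≤ 1 := by rw [hd]; exact Real.sqrt_le_one.2 hb1
        have := mb10 (N / d) (by positivity)
        rw [div_le_iff₀ (by positivity)]
        refine this.trans ?_
        rw [hab, hbd]
        have e1 : c * ((d ^ 2) ^ 2) ^ 3 * (N / d) ^ 3 = c * N ^ 3 * d ^ 8 * d := by field_simp
        have e2 : ((N / d) ^ 10)⁻¹ * N ^ 13 = N ^ 3 * d ^ 8 * d ^ 2 := by field_simp
        have e3 : ((N / d) ^ 10)⁻¹ * momentTen f t ≤ N ^ 3 * d ^ 8 * d ^ 2 := by
          rw [← e2]; gcongr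
        rw [e1]
        have e4 : c * N ^ 3 * d ^ 8 * d ≤ c * N ^ 3 * d ^ 8 * 1 := by gcongr
        have e5 : N ^ 3 * d ^ 8 * d ^ 2 ≤ N ^ 3 * d ^ 8 * 1 := by
          gcongr; exact pow_le_one₀ hd0.le hd1
        nlinarith
      · have : (c + 1) * N ^ 3 * (3 * N⁻¹ ^ 3) = 3 * (c + 1) := by field_simp
        rw [this]; linarith

lemma ode_bound (t C r0 : ℝ) (ht : 0 ≤ t) (hC : 0 ≤ C) (hr0 : 0 < r0) (X V : ℝ → E3) (e : ℝ → ℝ)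
    (hX : ∀ s ∈ Set.Icc (0 : ℝ) t, HasDerivAt X (vhat (V s)) s)
    (hV : ∀ s ∈ Set.Icc (0 : ℝ) t, HasDerivAt V (e s • X s) s)
    (he : ∀ s ∈ Set.Icc (0 : ℝ) t, 0 ≤ e s)
    (hb : ∀ s ∈ Set.Icc (0 : ℝ) t, e s * ‖X s‖ * √(‖X s‖ + r0) ^ 3 ≤ C) :
    √(1 + ‖V t‖ ^ 2) ≤ √(1 + ‖V 0‖ ^ 2) + 2 * C / √r0 := by
  have hG0 : ∀ s, 0 < √(1 + ‖V s‖ ^ 2) := fun s => Real.sqrt_pos.2 (by positivity)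
  have hG : ∀ s ∈ Icc 0 t, HasDerivAt (fun s => √(1 + ‖V s‖ ^ 2))
      (e s * inner ℝ (X s) (V s) / √(1 + ‖V s‖ ^ 2)) s := by
    intro s hs
    refine (((hV s hs).norm_sq.const_add 1).sqrt (by positivity)).congr_deriv ?_
    rw [inner_smul_right, real_inner_comm (X s) (V s), mul_div_mul_left _ _ (by norm_num)]
  have hw : ∀ s ∈ Icc 0 t, HasDerivAt (fun s => inner ℝ (X s) (V s))
      (e s * ‖X s‖ ^ 2 + ‖V s‖ ^ 2 / √(1 + ‖V s‖ ^ 2)) s := by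
    intro s hs
    refine ((hX s hs).inner ℝ (hV s hs)).congr_deriv ?_
    rw [inner_smul_right, real_inner_self_eq_norm_sq, vhat, real_inner_smul_left,
      real_inner_self_eq_norm_sq]
    ring
  have hwmono : MonotoneOn (fun s => inner ℝ (X s) (V s)) (Icc 0 t) := by
    apply monotoneOn_of_deriv_nonneg (convex_Icc 0 t)
    · exact fun s hs => (hw s hs).continuousAt.continuousWithinAt
    · intro s hs
      rw [interior_Icc] at hs
      exact (hw s (Ioo_subset_Icc_self hs)).differentiableAt.differentiableWithinAt
    · intro s hs
      rw [interior_Icc] at hs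
      have hs' := Ioo_subset_Icc_self hs
      rw [(hw s hs').deriv]
      have := he s hs'
      positivity
  have hwc : ContinuousOn (fun s => inner ℝ (X s) (V s)) (Icc 0 t) :=
    fun s hs => (hw s hs).continuousAt.continuousWithinAt
  -- incoming phase
  have hin : ∀ τ ∈ Icc 0 t, inner ℝ (X τ) (V τ) ≤ 0 →
      √(1 + ‖V τ‖ ^ 2) ≤ √(1 + ‖V 0‖ ^ 2) := by
    intro τ hτ hwτ
    have hsub : Icc 0 τ ⊆ Icc 0 t := Icc_subset_Icc_right hτ.2
    have : AntitoneOn (fun s => √(1 + ‖V s‖ ^ 2)) (Icc 0 τ) := by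
      apply antitoneOn_of_deriv_nonpos (convex_Icc 0 τ)
      · exact fun s hs => (hG s (hsub hs)).continuousAt.continuousWithinAt
      · intro s hs
        rw [interior_Icc] at hs
        exact (hG s (hsub (Ioo_subset_Icc_self hs))).differentiableAt.differentiableWithinAt
      · intro s hs
        rw [interior_Icc] at hs
        have hs' := hsub (Ioo_subset_Icc_self hs)
        rw [(hG s hs').deriv]
        have h1 := he s hs'
        have h2 : inner ℝ (X s) (V s) ≤ 0 := (hwmono hs' hτ hs.2.le).trans hwτ
        exact div_nonpos_of_nonpos_of_nonneg (mul_nonpos_of_nonneg_of_nonpos h1 h2) (hG0 s).le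
    exact this (left_mem_Icc.2 hτ.1) (right_mem_Icc.2 hτ.1) hτ.1
  -- outgoing phase
  have hout : ∀ τ ∈ Icc 0 t, (∀ s ∈ Ioo τ t, 0 < inner ℝ (X s) (V s)) →
      √(1 + ‖V t‖ ^ 2) ≤ √(1 + ‖V τ‖ ^ 2) + 2 * C / √r0 := by
    intro τ hτ hwτ
    have hsub : Icc τ t ⊆ Icc 0 t := Icc_subset_Icc_left hτ.1
    have hu0 : ∀ s, 0 < ‖X s‖ + r0 := fun s => by positivity
    have hΦ : ∀ s ∈ Ioo τ t, HasDerivAt (fun s => √(1 + ‖V s‖ ^ 2) + 2 * C / √(‖X s‖ + r0))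
        ((inner ℝ (X s) (V s) / √(1 + ‖V s‖ ^ 2)) * (e s - C / (‖X s‖ * √(‖X s‖ + r0) ^ 3))) s := by
      intro s hs
      have hs' := hsub (Ioo_subset_Icc_self hs)
      have hX0 : X s ≠ 0 := by
        intro h
        have := hwτ s hs
        rw [h, inner_zero_left] at this
        exact lt_irrefl _ this
      have hXp : 0 < ‖X s‖ := norm_pos_iff.2 hX0
      have hn : HasDerivAt (fun s => ‖X s‖) (inner ℝ (X s) (V s) / √(1 + ‖V s‖ ^ 2) / ‖X s‖) s := by
        have h1 := (hX s hs').norm_sq.sqrt (by positivity)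
        simp only [Real.sqrt_sq (norm_nonneg _)] at h1
        refine h1.congr_deriv ?_
        rw [vhat, inner_smul_right, mul_div_mul_left _ _ (by norm_num)]
        ring
      have hsq := (hn.add_const r0).sqrt (hu0 s).ne'
      have hup : 0 < √(‖X s‖ + r0) := Real.sqrt_pos.2 (hu0 s)
      refine ((hG s hs').add (((hasDerivAt_const s (2 * C)).div hsq hup.ne'))).congr_deriv ?_
      have := hG0 s
      field_simp
      ring
    have : AntitoneOn (fun s => √(1 + ‖V s‖ ^ 2) + 2 * C / √(‖X s‖ + r0)) (Icc τ t) := by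
      apply antitoneOn_of_deriv_nonpos (convex_Icc τ t)
      · intro s hs
        apply ContinuousAt.continuousWithinAt
        have hc1 := (hX s (hsub hs)).continuousAt
        have hc2 := (hG s (hsub hs)).continuousAt
        have hup : 0 < √(‖X s‖ + r0) := Real.sqrt_pos.2 (hu0 s)
        exact hc2.add (continuousAt_const.div (hc1.norm.add continuousAt_const).sqrt hup.ne')
      · intro s hs
        rw [interior_Icc] at hs
        exact (hΦ s hs).differentiableAt.differentiableWithinAt
      · intro s hs
        rw [interior_Icc] at hs
        have hs' := hsub (Ioo_subset_Icc_self hs)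
        rw [(hΦ s hs).deriv]
        have hwp := hwτ s hs
        have hXp : 0 < ‖X s‖ := by
          rw [norm_pos_iff]
          intro h
          rw [h, inner_zero_left] at hwp
          exact lt_irrefl _ hwp
        have hup : 0 < √(‖X s‖ + r0) := Real.sqrt_pos.2 (hu0 s)
        apply mul_nonpos_of_nonneg_of_nonpos
        · exact div_nonneg hwp.le (hG0 s).le
        · rw [sub_nonpos, le_div_iff₀ (by positivity), ← mul_assoc]
          exact hb s hs'
    have h2 := this (left_mem_Icc.2 hτ.2) (right_mem_Icc.2 hτ.2) hτ.2
    simp only at h2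
    have h3 : 2 * C / √(‖X τ‖ + r0) ≤ 2 * C / √r0 := by
      have : 0 < √r0 := Real.sqrt_pos.2 hr0
      gcongr
      linarith [norm_nonneg (X τ)]
    have h4 : 0 ≤ 2 * C / √(‖X t‖ + r0) := by positivity
    linarith
  by_cases hS : ∃ s ∈ Icc 0 t, inner ℝ (X s) (V s) ≤ 0
  · have hcomp : IsCompact (Icc 0 t ∩ (fun s => inner ℝ (X s) (V s)) ⁻¹' Iic 0) :=
      isCompact_Icc.of_isClosed_subset (hwc.preimage_isClosed_of_isClosed isClosed_Icc isClosed_Iic)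
        inter_subset_left
    obtain ⟨τ, ⟨hτ1, hτ2⟩, hτ3⟩ := hcomp.exists_isGreatest hS
    refine (hout τ hτ1 ?_).trans (by have := hin τ hτ1 hτ2; linarith)
    intro s hs
    by_contra hcon
    have := hτ3 ⟨⟨hτ1.1.trans hs.1.le, hs.2.le⟩, not_lt.1 hcon⟩
    exact absurd hs.1 (not_lt.2 this)
  · push Not at hS
    exact hout 0 ⟨le_refl _, ht⟩ fun s hs => hS s (Ioo_subset_Icc_self hs)

lemma vhat_norm_le (v : E3) : ‖vhat v‖ ≤ 1 := by
  have h0 : 0 < √(1 + ‖v‖ ^ 2) := Real.sqrt_pos.2 (by positivity)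
  rw [vhat, norm_smul, norm_inv, Real.norm_of_nonneg h0.le, inv_mul_le_one₀ h0]
  exact Real.le_sqrt_of_sq_le (by linarith)

/-- Control of the majority set in the radial case: a characteristic starting (at time 0)
in the ball of radius `\tilde M^r(t)^{1/(2n_r)}` of phase space satisfies
`|X(t)| ≤ C \tilde M^r(t)^{1/(2n_r)}` and
`|V(t)| ≤ C \tilde M^r(t)^{(5+2δ)/((6-2δ)(n_r-1))}`, with `n_r = 10`. -/
theorem radial_majority_control (δ D : ℝ)
    (hδ : δ ∈ Set.Ioo (0 : ℝ) (((10 : ℝ) ^ (10 : ℕ))⁻¹)) (hD : 0 < D) :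
    ∃ C : ℝ, ∀ (T : ℝ) (f : ℝ → E3 → E3 → ℝ),
      IsRVPSolution (Set.Ico 0 T) f →
      (∀ t ∈ Set.Ico (0 : ℝ) T, ∀ R : E3 ≃ₗᵢ[ℝ] E3, R.toLinearEquiv.det = 1 →
        ∀ x v, f t (R x) (R v) = f t x v) →
      (∀ t ∈ Set.Ico (0 : ℝ) T, ∀ x v, f t x v ≤ D) →
      (∀ t ∈ Set.Ico (0 : ℝ) T,
        Integrable (fun p : E3 × E3 => (1 + ‖p.2‖) * f t p.1 p.2) volume) →
      (∀ t ∈ Set.Ico (0 : ℝ) T, (∫ p : E3 × E3, (1 + ‖p.2‖) * f t p.1 p.2) ≤ D) →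
      (∀ t ∈ Set.Ico (0 : ℝ) T,
        Integrable (fun p : E3 × E3 => (1 + ‖p.2‖) ^ (10 : ℕ) * f t p.1 p.2) volume) →
      ∀ t ∈ Set.Ico (0 : ℝ) T,
        BddAbove (momentTen f '' Set.Icc 0 t) →
        ∀ X V : ℝ → E3,
          (∀ s ∈ Set.Icc (0 : ℝ) t, HasDerivAt X (vhat (V s)) s) →
          (∀ s ∈ Set.Icc (0 : ℝ) t, HasDerivAt V (rvpField f s (X s)) s) →
          ‖X 0‖ + ‖V 0‖ ≤ tildeMr f t ^ ((1 : ℝ) / 20) →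
          ‖X t‖ ≤ C * tildeMr f t ^ ((1 : ℝ) / 20) ∧
          ‖V t‖ ≤ C * tildeMr f t ^ ((5 + 2 * δ) / ((6 - 2 * δ) * 9)) := by
  set c := D * (volume.real (Metric.ball (0:E3) 1)) ^ 2 with hcc
  have hc0 : 0 ≤ c := by positivity
  set K := 3 * (c + D + 1) with hK
  have hK0 : 0 < K := by positivity
  refine ⟨2 + 2 * K, ?_⟩
  intro T f hsol hrot hfD hi hiD hi10 t ht hbdd X V hX hV h0
  obtain ⟨hpos, hcd, -⟩ := hsol
  have ht0 : 0 ≤ t := ht.1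
  have hsub : ∀ s ∈ Icc 0 t, s ∈ Ico 0 T := fun s hs => ⟨hs.1, hs.2.trans_lt ht.2⟩
  have hcont : ∀ s ∈ Ico 0 T, Continuous (fun p : E3 × E3 => f s p.1 p.2) := by
    intro s hs
    have := hcd.continuousOn.comp_continuous (f := fun p : E3 × E3 => (s, p)) (by fun_prop)
      (fun p => ⟨hs, trivial⟩)
    exact this
  have hmom0 : ∀ s ∈ Ico 0 T, 0 ≤ momentTen f s := fun s hs =>
    integral_nonneg fun p => mul_nonneg (by positivity) (hpos s hs _ _)
  have hsup0 : 0 ≤ sSup (momentTen f '' Set.Icc 0 t) := by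
    apply Real.sSup_nonneg
    rintro _ ⟨s, hs, rfl⟩
    exact hmom0 s (hsub s hs)
  have hpow : (1 + t) ^ 20 ≤ tildeMr f t := by unfold tildeMr; linarith
  have hM1 : 1 ≤ tildeMr f t := (one_le_pow₀ (by linarith)).trans hpow
  have hmomM : ∀ s ∈ Icc 0 t, momentTen f s ≤ tildeMr f t := by
    intro s hs
    have := le_csSup hbdd (mem_image_of_mem _ hs)
    have h1 : 0 ≤ (1 + t) ^ 20 := by positivity
    unfold tildeMr; linarith
  generalize tildeMr f t = M at *
  have hM0 : 0 ≤ M := by linarith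
  set N := M ^ ((1:ℝ) / 13) with hN
  have hN1 : 1 ≤ N := Real.one_le_rpow hM1 (by norm_num)
  have hNM : N ^ 13 = M := by
    rw [hN, ← Real.rpow_natCast, ← Real.rpow_mul hM0]; norm_num
  set A := M ^ ((1:ℝ) / 20) with hA
  have htA : 1 + t ≤ A := by
    have := Real.rpow_le_rpow (by positivity) hpow (by norm_num : (0:ℝ) ≤ 1 / 20)
    rwa [← Real.rpow_natCast, ← Real.rpow_mul (by linarith),
      show ((20:ℕ):ℝ) * (1 / 20) = 1 by norm_num, Real.rpow_one] at this
  constructor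
  · have h2 := (convex_Icc 0 t).norm_image_sub_le_of_norm_hasDerivWithin_le (f := X) (C := 1)
      (f' := fun s => vhat (V s)) (fun s hs => (hX s hs).hasDerivWithinAt)
      (fun s hs => vhat_norm_le _) (left_mem_Icc.2 ht0) (right_mem_Icc.2 ht0)
    have h3 : ‖X t‖ ≤ ‖X 0‖ + ‖X t - X 0‖ := norm_le_norm_add_norm_sub' _ _
    rw [sub_zero, Real.norm_of_nonneg ht0, one_mul] at h2
    have := norm_nonneg (V 0)
    nlinarith
  · have hfield := fun s (hs : s ∈ Icc 0 t) => field_est f s D N (hrot s (hsub s hs))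
      (hcont s (hsub s hs)) (hpos s (hsub s hs)) (hfD s (hsub s hs)) hD (hi s (hsub s hs))
      (hiD s (hsub s hs)) (hi10 s (hsub s hs)) hN1 (by rw [hNM]; exact hmomM s hs) (X s)
    choose! e he1 he2 he3 using hfield
    have hode := ode_bound t K (N ^ 2)⁻¹ ht0 hK0.le (by positivity) X V e hX
      (fun s hs => by rw [← he2 s hs]; exact hV s hs) he1 he3
    have hsq : √((N ^ 2)⁻¹) = N⁻¹ := by
      rw [← inv_pow, Real.sqrt_sq (by positivity)]
    rw [hsq, div_inv_eq_mul] at hode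
    have h1 : ‖V t‖ ≤ √(1 + ‖V t‖ ^ 2) := Real.le_sqrt_of_sq_le (by linarith)
    have h2 : √(1 + ‖V 0‖ ^ 2) ≤ 1 + ‖V 0‖ := by
      rw [Real.sqrt_le_left (by positivity)]
      nlinarith [norm_nonneg (V 0)]
    have hδ0 := hδ.1
    have hδ1 : δ < 1 := hδ.2.trans (by norm_num)
    have hexp : (5:ℝ) / 54 ≤ (5 + 2 * δ) / ((6 - 2 * δ) * 9) := by
      rw [div_le_div_iff₀ (by norm_num) (by nlinarith)]
      nlinarith
    have hB1 : A ≤ M ^ ((5 + 2 * δ) / ((6 - 2 * δ) * 9)) :=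
      Real.rpow_le_rpow_of_exponent_le hM1 (by linarith)
    have hB2 : N ≤ M ^ ((5 + 2 * δ) / ((6 - 2 * δ) * 9)) :=
      Real.rpow_le_rpow_of_exponent_le hM1 (by linarith)
    have hV0 := norm_nonneg (X 0)
    have := mul_le_mul_of_nonneg_left hB2 (by positivity : 0 ≤ 2 * K)
    nlinarith
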